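/- For every M ∈ N_n^+ and all 1 ≤ a < b < c ≤ n, the Y-variables satisfy: Y_{abc}(M) = Ỹ^{a,a+c−b,c}(M) = (Δ_{[a,b−1]}^{[a+c−b+1,c]}(M)·Δ_{[a+1,b]}^{[a+c−b,c−1]}(M)) / (Δ_{[a,b]}^{[a+c−b,c]}(M)·Δ_{[a+1,b−1]}^{[a+c−b+1,c−1]}(M)); moreover Ỹ_{abc}(M′) = 1/Y_{n+1−c,n+1−b,n+1−a}(M) and Ỹ^{abc}(M″) = 1/Y^{n+1−c,n+1−b,n+1−a}(M). -/

import Mathlib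

/-!
The first two identities only use that `M` is unipotent upper triangular. In a right flag minor with
rows `[p,q] ∪ [r,n]`, the rows and columns `[r,n]` form a unipotent diagonal block with zeros to its
left, so the flag minor equals the minor on rows `[p,q]` and the `q + 1 - p` columns ending at
`r - 1` (`flagR_eq`); likewise the columns `[1,s]` of an upper flag minor can be dropped
(`flagU_eq`). Substituting this in `Yr` and `Ytu` gives the same cross-ratio of solid minors of `M`.

For the last two, `P M P = M′ P D M″` is rewritten as `M′ L = P M` with `L = P D M″ P`, and as
`L′ M″ = M P` with `L′ = P M′ P D`, where `L`, `L′` are lower triangular and invertible.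
Multiplication by a lower triangular matrix rescales all flag minors of size `k` by one common
factor (`gminor_mul_right`), and left multiplication by `P` reverses the row set up to a sign
depending on `k` (`gminor_rev`), and similarly for columns. Hence flag minors of `M′` and `M″` are
those of `M` on reversed index sets, up to nonzero factors depending only on the size
(`flagR_scale`, `flagU_scale`), and these factors cancel in the Y-variables (`ratio_rev`).
-/

open Matrix BigOperators

noncomputable section

/-- The dilogarithm function `Li₂`. -/
def dilog (x : ℝ) : ℝ := ∑' k : ℕ, x ^ (k + 1) / ((k : ℝ) + 1) ^ 2

/-- The Rogers dilogarithm `L(x) = Li₂(x) + (1/2) log x log (1-x)`. -/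
def rogersL (x : ℝ) : ℝ := dilog x + (1 / 2) * Real.log x * Real.log (1 - x)

/-- `l(x) = (6/π²) L(x/(1+x))`. -/
def ell (x : ℝ) : ℝ := 6 / Real.pi ^ 2 * rogersL (x / (1 + x))

/-- The minor of `M` on rows `I` and columns `J` (both taken in increasing order);
by convention it is `0` if the cardinalities disagree, and `1` for `I = J = ∅`. -/
def gminor {n : ℕ} (M : Matrix (Fin n) (Fin n) ℝ) (I J : Finset (Fin n)) : ℝ :=
  if h : J.card = I.card then
    Matrix.det (Matrix.of fun i j : Fin I.card =>
      M (I.orderEmbOfFin rfl i) (J.orderEmbOfFin h j))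
  else 0

/-- The 1-based interval `[a,b]` regarded as a finset of `Fin n`. -/
def iv (n a b : ℕ) : Finset (Fin n) :=
  Finset.univ.filter fun i => a ≤ (i : ℕ) + 1 ∧ (i : ℕ) + 1 ≤ b

/-- The last `k` columns (as a finset of `Fin n`). -/
def lastCols (n k : ℕ) : Finset (Fin n) := Finset.univ.filter fun j => n - k ≤ (j : ℕ)

/-- The first `k` rows (as a finset of `Fin n`). -/
def firstRows (n k : ℕ) : Finset (Fin n) := Finset.univ.filter fun i => (i : ℕ) < k

/-- The right flag minor `Δ_I`: rows `I`, last `|I|` columns. -/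
def flagR {n : ℕ} (M : Matrix (Fin n) (Fin n) ℝ) (I : Finset (Fin n)) : ℝ :=
  gminor M I (lastCols n I.card)

/-- The upper flag minor `Δ^J`: first `|J|` rows, columns `J`. -/
def flagU {n : ℕ} (M : Matrix (Fin n) (Fin n) ℝ) (J : Finset (Fin n)) : ℝ :=
  gminor M (firstRows n J.card) J

/-- `Ī = {n+1-a : a ∈ I}` (in 1-based labelling; `Fin.rev` in 0-based labelling). -/
def barSet {n : ℕ} (I : Finset (Fin n)) : Finset (Fin n) := I.image Fin.rev

/-- `B_n`: invertible upper triangular real matrices. -/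
def Bset (n : ℕ) : Set (Matrix (Fin n) (Fin n) ℝ) :=
  {M | M.BlockTriangular id ∧ IsUnit M.det}

/-- `N_n`: unipotent upper triangular real matrices. -/
def Nset (n : ℕ) : Set (Matrix (Fin n) (Fin n) ℝ) :=
  {M | M.BlockTriangular id ∧ ∀ i, M i i = 1}

/-- `M` is totally positive with respect to a class `S` of matrices: `M ∈ S` and every minor
that does not vanish identically on `S` is positive. -/
def totPos {n : ℕ} (S : Set (Matrix (Fin n) (Fin n) ℝ)) (M : Matrix (Fin n) (Fin n) ℝ) : Prop :=
  M ∈ S ∧ ∀ I J : Finset (Fin n), I.card = J.card →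
    (∃ A ∈ S, gminor A I J ≠ 0) → 0 < gminor M I J

/-- `B_n^+`: totally positive matrices in `B_n`. -/
def Bpos (n : ℕ) (M : Matrix (Fin n) (Fin n) ℝ) : Prop := totPos (Bset n) M

/-- `N_n^+`: totally positive matrices in `N_n`. -/
def Npos (n : ℕ) (M : Matrix (Fin n) (Fin n) ℝ) : Prop := totPos (Nset n) M

/-- The permutation matrix `P` with `P_{ij} = δ_{i+j,n+1}` (1-based). -/
def Pmat (n : ℕ) : Matrix (Fin n) (Fin n) ℝ :=
  Matrix.of fun i j => if (i : ℕ) + (j : ℕ) + 2 = n + 1 then 1 else 0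

/-- `Decomp n M M₁ M₂ D` asserts `P M P = M₁ P D M₂` with `M₁, M₂ ∈ N_n^+` and `D` diagonal;
i.e. `M₁ = M′`, `M₂ = M″`, `D = D_M`. -/
def Decomp (n : ℕ) (M M₁ M₂ D : Matrix (Fin n) (Fin n) ℝ) : Prop :=
  Npos n M₁ ∧ Npos n M₂ ∧ D.IsDiag ∧
    Pmat n * M * Pmat n = M₁ * Pmat n * D * M₂

/-- `J_k(x) = exp(x e_k) = 1 + x e_k` where `(e_k)_{ij} = δ_{ik} δ_{j,k+1}` (1-based). -/
def Jmat (n : ℕ) (k : ℕ) (x : ℝ) : Matrix (Fin n) (Fin n) ℝ :=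
  1 + Matrix.of fun (i j : Fin n) => if (i : ℕ) + 1 = k ∧ (j : ℕ) = k then x else 0

/-- The matrix `𝕁_1 ⋯ 𝕁_{n-1}` with `𝕁_k = J_k(x_{1,k+1}) ⋯ J_1(x_{k,k+1})`,
for a (1-based) coordinate function `x`. -/
def jacobiMat (n : ℕ) (x : ℕ → ℕ → ℝ) : Matrix (Fin n) (Fin n) ℝ :=
  (((List.range (n - 1)).map fun p =>
      (((List.range (p + 1)).map fun m => Jmat n (p + 1 - m) (x (m + 1) (p + 2))).prod)).prod)

/-- `x` is the collection of Jacobi coordinates of `M`: all `x i j` (for `1 ≤ i < j ≤ n`) are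
positive and `M = 𝕁_1 ⋯ 𝕁_{n-1}`. -/
def IsJacobi (n : ℕ) (M : Matrix (Fin n) (Fin n) ℝ) (x : ℕ → ℕ → ℝ) : Prop :=
  (∀ i j, 1 ≤ i → i < j → j ≤ n → 0 < x i j) ∧ M = jacobiMat n x

/-- The Y-variable `Y_{abc}(M)`. -/
def Yr (n : ℕ) (M : Matrix (Fin n) (Fin n) ℝ) (a b c : ℕ) : ℝ :=
  flagR M (iv n a (b-1) ∪ iv n (c+1) n) * flagR M (iv n (a+1) b ∪ iv n c n) /
    (flagR M (iv n a b ∪ iv n (c+1) n) * flagR M (iv n (a+1) (b-1) ∪ iv n c n))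

/-- The Y-variable `Ỹ_{abc}(M)`. -/
def Ytr (n : ℕ) (M : Matrix (Fin n) (Fin n) ℝ) (a b c : ℕ) : ℝ :=
  flagR M (iv n 1 a ∪ iv n (b+1) (c-1)) * flagR M (iv n 1 (a-1) ∪ iv n b c) /
    (flagR M (iv n 1 a ∪ iv n b (c-1)) * flagR M (iv n 1 (a-1) ∪ iv n (b+1) c))

/-- The Y-variable `Y^{abc}(M)`. -/
def Yu (n : ℕ) (M : Matrix (Fin n) (Fin n) ℝ) (a b c : ℕ) : ℝ :=
  flagU M (iv n a b ∪ iv n (c+1) n) * flagU M (iv n (a+1) (b-1) ∪ iv n c n) /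
    (flagU M (iv n a (b-1) ∪ iv n (c+1) n) * flagU M (iv n (a+1) b ∪ iv n c n))

/-- The Y-variable `Ỹ^{abc}(M)`. -/
def Ytu (n : ℕ) (M : Matrix (Fin n) (Fin n) ℝ) (a b c : ℕ) : ℝ :=
  flagU M (iv n 1 a ∪ iv n b (c-1)) * flagU M (iv n 1 (a-1) ∪ iv n (b+1) c) /
    (flagU M (iv n 1 a ∪ iv n (b+1) (c-1)) * flagU M (iv n 1 (a-1) ∪ iv n b c))

/-- The discrete tetrahedron `T_n = {(a,b,c) : 1 ≤ a < b < c ≤ n}`. -/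
def Tset (n : ℕ) : Finset (ℕ × ℕ × ℕ) :=
  ((Finset.range (n+1)) ×ˢ (Finset.range (n+1)) ×ˢ (Finset.range (n+1))).filter
    fun t => 1 ≤ t.1 ∧ t.1 < t.2.1 ∧ t.2.1 < t.2.2 ∧ t.2.2 ≤ n


/-! ### Minors -/

/-- A minor can be computed from any increasing enumerations of its rows and columns. -/
lemma gminor_eq {n k : ℕ} (M : Matrix (Fin n) (Fin n) ℝ) {I J : Finset (Fin n)}
    {f g : Fin k → Fin n} (hf : StrictMono f) (hg : StrictMono g)
    (hI : Finset.univ.image f = I) (hJ : Finset.univ.image g = J) :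
    gminor M I J = (M.submatrix f g).det := by
  have hIk : I.card = k := by
    rw [← hI, Finset.card_image_of_injective _ hf.injective]; simp
  have hJk : J.card = k := by
    rw [← hJ, Finset.card_image_of_injective _ hg.injective]; simp
  subst hIk
  have e1 : f = I.orderEmbOfFin rfl :=
    Finset.orderEmbOfFin_unique rfl (fun x => by rw [← hI]; simp) hf
  have e2 : g = J.orderEmbOfFin hJk :=
    Finset.orderEmbOfFin_unique hJk (fun x => by rw [← hJ]; simp) hg
  rw [gminor, dif_pos hJk, e1, e2]
  rfl

lemma exists_enum {n k : ℕ} (I : Finset (Fin n)) (h : I.card = k) :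
    ∃ f : Fin k → Fin n, StrictMono f ∧ Finset.univ.image f = I :=
  ⟨I.orderEmbOfFin h, (I.orderEmbOfFin h).strictMono, by
    simp⟩

lemma gminor_transpose {n : ℕ} (M : Matrix (Fin n) (Fin n) ℝ) {I J : Finset (Fin n)}
    (h : I.card = J.card) : gminor Mᵀ I J = gminor M J I := by
  obtain ⟨f, hf, hI⟩ := exists_enum I h
  obtain ⟨g, hg, hJ⟩ := exists_enum J rfl
  rw [gminor_eq Mᵀ hf hg hI hJ, gminor_eq M hg hf hJ hI, ← det_transpose]
  rfl

/-- Minors of a block upper triangular submatrix factor. -/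
lemma gminor_block {n : ℕ} (M : Matrix (Fin n) (Fin n) ℝ) {I₁ I₂ J₁ J₂ : Finset (Fin n)}
    (h1 : I₁.card = J₁.card) (h2 : I₂.card = J₂.card)
    (hI : ∀ i ∈ I₁, ∀ j ∈ I₂, i < j) (hJ : ∀ i ∈ J₁, ∀ j ∈ J₂, i < j)
    (hz : ∀ i ∈ I₂, ∀ j ∈ J₁, M i j = 0) :
    gminor M (I₁ ∪ I₂) (J₁ ∪ J₂) = gminor M I₁ J₁ * gminor M I₂ J₂ := by
  obtain ⟨f₁, hf₁, e1⟩ := exists_enum I₁ h1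
  obtain ⟨f₂, hf₂, e2⟩ := exists_enum I₂ h2
  obtain ⟨g₁, hg₁, e3⟩ := exists_enum J₁ rfl
  obtain ⟨g₂, hg₂, e4⟩ := exists_enum J₂ rfl
  have mono : ∀ {k l : ℕ} {u : Fin k → Fin n} {v : Fin l → Fin n}, StrictMono u →
      StrictMono v → (∀ i j, u i < v j) → StrictMono (Fin.append u v) := by
    intro k l u v hu hv huv x y
    refine Fin.addCases (fun i => ?_) (fun i => ?_) x <;>
      refine Fin.addCases (fun j => ?_) (fun j => ?_) y <;> intro hxy
    · simpa using hu (show i < j from hxy)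
    · simpa using huv i j
    · simp [Fin.lt_def] at hxy
      omega
    · simpa using hv (show i < j from (Fin.natAdd_lt_natAdd_iff k).1 hxy)
  have img : ∀ {k l : ℕ} (u : Fin k → Fin n) (v : Fin l → Fin n),
      Finset.univ.image (Fin.append u v) = Finset.univ.image u ∪ Finset.univ.image v := by
    intro k l u v
    ext x
    simp only [Finset.mem_image, Finset.mem_univ, true_and, Finset.mem_union]
    constructor
    · rintro ⟨i, rfl⟩
      refine Fin.addCases (fun i => ?_) (fun i => ?_) i <;> simp
    · rintro (⟨i, rfl⟩ | ⟨i, rfl⟩)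
      · exact ⟨Fin.castAdd l i, by simp⟩
      · exact ⟨Fin.natAdd k i, by simp⟩
  rw [gminor_eq M hf₁ hg₁ e1 e3, gminor_eq M hf₂ hg₂ e2 e4,
    gminor_eq M (f := Fin.append f₁ f₂) (g := Fin.append g₁ g₂)
      (mono hf₁ hf₂ fun i j => hI _ (by simp [← e1]) _ (by simp [← e2]))
      (mono hg₁ hg₂ fun i j => hJ _ (by simp [← e3]) _ (by simp [← e4]))
      (by rw [img, e1, e2]) (by rw [img, e3, e4]),
    ← det_fromBlocks_zero₂₁ (M.submatrix f₁ g₁) (M.submatrix f₁ g₂) (M.submatrix f₂ g₂),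
    ← det_submatrix_equiv_self finSumFinEquiv]
  congr 1
  ext x y
  rcases x with x | x <;> rcases y with y | y <;> simp
  exact hz _ (by simp [← e2]) _ (by simp [← e3])

/-- Principal minors of an upper triangular matrix are products of diagonal entries. -/
lemma gminor_diag {n : ℕ} {M : Matrix (Fin n) (Fin n) ℝ} (hM : M.BlockTriangular id)
    (I : Finset (Fin n)) : gminor M I I = ∏ i ∈ I, M i i := by
  obtain ⟨f, hf, e⟩ := exists_enum I rfl
  rw [gminor_eq M hf hf e e, det_of_isUpperTriangular]
  · conv_rhs => rw [← e]
    rw [Finset.prod_image hf.injective.injOn]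
    rfl
  · intro i j hij
    exact hM (hf hij)

/-- Cauchy–Binet in the degenerate case where only one summand survives: the right factor maps
the columns `J` into the rows `J`. -/
lemma gminor_mul_right {n : ℕ} (A B : Matrix (Fin n) (Fin n) ℝ) {I J : Finset (Fin n)}
    (h : I.card = J.card) (hB : ∀ k ∉ J, ∀ j ∈ J, B k j = 0) :
    gminor (A * B) I J = gminor A I J * gminor B J J := by
  obtain ⟨f, hf, e⟩ := exists_enum I h
  obtain ⟨g, hg, e'⟩ := exists_enum J rfl
  rw [gminor_eq _ hf hg e e', gminor_eq _ hf hg e e', gminor_eq _ hg hg e' e', ← det_mul]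
  congr 1
  ext x y
  simp only [submatrix_apply, mul_apply]
  rw [← Finset.sum_image (f := fun k => A (f x) k * B k (g y)) (hg.injective.injOn), e']
  symm
  refine Finset.sum_subset (Finset.subset_univ _) fun k _ hk => ?_
  rw [hB k hk _ (by simp [← e']), mul_zero]

/-- Reversing the order of the rows changes a minor by a sign depending only on its size. -/
lemma gminor_rev {n : ℕ} (M : Matrix (Fin n) (Fin n) ℝ) {I J : Finset (Fin n)}
    (h : I.card = J.card) :
    gminor (M.submatrix Fin.rev id) I J =
      (Equiv.Perm.sign (Fin.revPerm : Equiv.Perm (Fin I.card)) : ℤ) *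
        gminor M (barSet I) J := by
  obtain ⟨f, hf, e⟩ := exists_enum I rfl
  obtain ⟨g, hg, e'⟩ := exists_enum J h.symm
  have hf' : StrictMono (Fin.rev ∘ f ∘ Fin.rev) := by
    intro x y hxy
    simpa using hf (Fin.rev_lt_rev.2 hxy)
  have e2 : Finset.univ.image (Fin.rev ∘ f ∘ Fin.rev) = barSet I := by
    rw [barSet]
    conv_rhs => rw [← e]
    ext x
    simp only [Finset.mem_image, Finset.mem_univ, true_and, Function.comp]
    constructor
    · rintro ⟨i, rfl⟩
      exact ⟨_, ⟨_, rfl⟩, rfl⟩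
    · rintro ⟨_, ⟨i, rfl⟩, rfl⟩
      exact ⟨Fin.rev i, by simp⟩
  rw [gminor_eq _ hf hg e e', gminor_eq _ hf' hg e2 e', ← det_permute]
  congr 1
  ext x y
  simp

/-! ### Index sets -/

lemma card_iv_union {n p q r s : ℕ} (hp : 1 ≤ p) (hqr : q < r) (hq : q ≤ n) (hs : s ≤ n) :
    (iv n p q ∪ iv n r s).card = (q + 1 - p) + (s + 1 - r) := by
  have key : ∀ {p q : ℕ}, 1 ≤ p → q ≤ n → (iv n p q).card = q + 1 - p := by
    intro p q hp hq
    rw [← Nat.card_Icc, ← Finset.card_image_of_injective (f := fun i : Fin n => (i : ℕ) + 1) _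
      (fun i j h => Fin.ext (Nat.succ_injective h))]
    congr 1
    ext x
    simp only [iv, Finset.mem_image, Finset.mem_filter, Finset.mem_univ, true_and,
      Finset.mem_Icc]
    constructor
    · rintro ⟨i, hi, rfl⟩
      exact hi
    · intro hx
      exact ⟨⟨x - 1, by omega⟩, by dsimp only; omega, by dsimp only; omega⟩
  rw [Finset.card_union_of_disjoint, key hp hq, key (by omega) hs]
  rw [Finset.disjoint_left]
  intro x
  simp only [iv, Finset.mem_filter, Finset.mem_univ, true_and]
  omega

lemma card_iv {n p q : ℕ} (hp : 1 ≤ p) (hq : q ≤ n) : (iv n p q).card = q + 1 - p := by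
  have h := card_iv_union (n := n) (p := p) (q := q) (r := n + 1) (s := n) hp (by omega) hq le_rfl
  have : iv n (n + 1) n = ∅ := by
    ext x
    simp only [iv, Finset.mem_filter, Finset.mem_univ, true_and, Finset.notMem_empty, iff_false]
    omega
  rw [this, Finset.union_empty] at h
  omega

lemma card_lastCols {n k : ℕ} (h : k ≤ n) : (lastCols n k).card = k := by
  have : lastCols n k = iv n (n - k + 1) n := by
    ext x
    simp only [iv, lastCols, Finset.mem_filter, Finset.mem_univ, true_and]
    omega
  rw [this, card_iv (by omega) le_rfl]
  omega

lemma card_firstRows {n k : ℕ} (h : k ≤ n) : (firstRows n k).card = k := by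
  have : firstRows n k = iv n 1 k := by
    ext x
    simp only [iv, firstRows, Finset.mem_filter, Finset.mem_univ, true_and]
    omega
  rw [this, card_iv le_rfl h]
  omega

lemma card_bar {n : ℕ} (I : Finset (Fin n)) : (barSet I).card = I.card :=
  Finset.card_image_of_injective _ Fin.rev_injective

lemma bar_union_iv {n p q r s p' q' r' s' : ℕ}
    (h1 : p' + q = n + 1) (h2 : q' + p = n + 1) (h3 : r' + s = n + 1) (h4 : s' + r = n + 1) :
    barSet (iv n p q ∪ iv n r s) = iv n r' s' ∪ iv n p' q' := by
  ext x
  simp only [barSet, iv, Finset.mem_image, Finset.mem_union, Finset.mem_filter, Finset.mem_univ,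
    true_and]
  constructor
  · rintro ⟨y, hy, rfl⟩
    simp only [Fin.val_rev]
    omega
  · intro hx
    refine ⟨Fin.rev x, ?_, Fin.rev_rev x⟩
    simp only [Fin.val_rev]
    omega

/-! ### Flag minors of unipotent matrices -/

/-- For unipotent `M`, the rows `[r,n]` of a right flag minor can be discarded. -/
lemma flagR_eq {n : ℕ} {M : Matrix (Fin n) (Fin n) ℝ} (hM : M ∈ Nset n) {p q r u : ℕ}
    (hp : 1 ≤ p) (hpq : p ≤ q + 1) (hqr : q < r) (hr : r ≤ n + 1) (hu : u + q + 1 = p + r) :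
    flagR M (iv n p q ∪ iv n r n) = gminor M (iv n p q) (iv n u (r - 1)) := by
  have hc := card_iv_union (n := n) (p := p) (q := q) (r := r) (s := n) hp hqr (by omega) le_rfl
  have hl : lastCols n (iv n p q ∪ iv n r n).card = iv n u (r - 1) ∪ iv n r n := by
    rw [hc]
    ext x
    simp only [iv, lastCols, Finset.mem_union, Finset.mem_filter, Finset.mem_univ, true_and]
    omega
  rw [flagR, hl, gminor_block, gminor_diag hM.1]
  · simp [hM.2]
  · rw [card_iv hp (by omega), card_iv (by omega) (by omega)]
    omega
  · rfl
  · intro i hi j hj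
    simp only [iv, Finset.mem_filter, Finset.mem_univ, true_and] at hi hj
    rw [Fin.lt_def]; omega
  · intro i hi j hj
    simp only [iv, Finset.mem_filter, Finset.mem_univ, true_and] at hi hj
    rw [Fin.lt_def]; omega
  · intro i hi j hj
    simp only [iv, Finset.mem_filter, Finset.mem_univ, true_and] at hi hj
    exact hM.1 (show j < i by rw [Fin.lt_def]; omega)

/-- For unipotent `M`, the columns `[1,s]` of an upper flag minor can be discarded. -/
lemma flagU_eq {n : ℕ} {M : Matrix (Fin n) (Fin n) ℝ} (hM : M ∈ Nset n) {p q s v : ℕ}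
    (hsp : s < p) (hpq : p ≤ q + 1) (hq : q ≤ n) (hv : v + p = s + q + 1) :
    flagU M (iv n 1 s ∪ iv n p q) = gminor M (iv n (s + 1) v) (iv n p q) := by
  have hc := card_iv_union (n := n) (p := 1) (q := s) (r := p) (s := q) le_rfl hsp (by omega) hq
  have hl : firstRows n (iv n 1 s ∪ iv n p q).card = iv n 1 s ∪ iv n (s + 1) v := by
    rw [hc]
    ext x
    simp only [iv, firstRows, Finset.mem_union, Finset.mem_filter, Finset.mem_univ, true_and]
    omega
  rw [flagU, hl, gminor_block, gminor_diag hM.1]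
  · simp [hM.2]
  · rfl
  · rw [card_iv (by omega) (by omega), card_iv (by omega) (by omega)]
    omega
  · intro i hi j hj
    simp only [iv, Finset.mem_filter, Finset.mem_univ, true_and] at hi hj
    rw [Fin.lt_def]; omega
  · intro i hi j hj
    simp only [iv, Finset.mem_filter, Finset.mem_univ, true_and] at hi hj
    rw [Fin.lt_def]; omega
  · intro i hi j hj
    simp only [iv, Finset.mem_filter, Finset.mem_univ, true_and] at hi hj
    exact hM.1 (show j < i by rw [Fin.lt_def]; omega)

/-! ### The reversal matrix and triangular factors -/

lemma Pmat_eq (n : ℕ) : Pmat n = (1 : Matrix (Fin n) (Fin n) ℝ).submatrix Fin.rev id := by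
  ext i j
  simp only [Pmat, of_apply, submatrix_apply, one_apply, id, Fin.ext_iff, Fin.val_rev]
  congr 1
  apply propext
  omega

lemma Pmat_mul {n : ℕ} (A : Matrix (Fin n) (Fin n) ℝ) : Pmat n * A = A.submatrix Fin.rev id := by
  ext i j
  simp [Pmat_eq, mul_apply, one_apply]

lemma Pmat_sq (n : ℕ) : Pmat n * Pmat n = 1 := by
  rw [Pmat_mul, Pmat_eq]
  ext i j
  simp [one_apply]

lemma Pmat_transpose (n : ℕ) : (Pmat n)ᵀ = Pmat n := by
  ext i j
  simp only [Pmat, of_apply, transpose_apply, add_comm (i : ℕ)]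

lemma mul_Pmat {n : ℕ} (A : Matrix (Fin n) (Fin n) ℝ) : A * Pmat n = A.submatrix id Fin.rev := by
  rw [← transpose_transpose (A * Pmat n), transpose_mul, Pmat_transpose, Pmat_mul]
  rfl

/-- If `A L = P M` with `L` lower triangular and invertible, the right flag minors of `A` are those
of `M` on the reversed row sets, up to nonzero factors depending only on the size of the minor. -/
lemma flagR_scale {n : ℕ} {M A L : Matrix (Fin n) (Fin n) ℝ} (h : A * L = Pmat n * M)
    (hL : Lᵀ.BlockTriangular id) (hd : ∀ i, L i i ≠ 0) :
    ∃ s : ℕ → ℝ, (∀ k, s k ≠ 0) ∧ ∀ I, flagR M (barSet I) = s I.card * flagR A I := by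
  refine ⟨fun k => (Equiv.Perm.sign (Fin.revPerm : Equiv.Perm (Fin k)) : ℤ) *
    gminor L (lastCols n k) (lastCols n k), fun k => ?_, fun I => ?_⟩
  · refine mul_ne_zero (by exact_mod_cast Units.ne_zero _) ?_
    rw [← gminor_transpose L rfl, gminor_diag hL]
    exact Finset.prod_ne_zero_iff.2 fun i _ => hd i
  · have hc : I.card = (lastCols n I.card).card :=
      (card_lastCols (by simpa using Finset.card_le_univ I)).symm
    have h1 := gminor_rev M hc
    rw [← Pmat_mul, ← h, gminor_mul_right _ _ hc] at h1
    · rw [flagR, flagR, card_bar]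
      have hs : (((Equiv.Perm.sign (Fin.revPerm : Equiv.Perm (Fin I.card)) : ℤ) : ℝ)) *
          ((Equiv.Perm.sign (Fin.revPerm : Equiv.Perm (Fin I.card)) : ℤ) : ℝ) = 1 := by
        exact_mod_cast Int.units_coe_mul_self _
      linear_combination (-gminor M (barSet I) (lastCols n I.card)) * hs -
        ((Equiv.Perm.sign (Fin.revPerm : Equiv.Perm (Fin I.card)) : ℤ) : ℝ) * h1
    · intro k hk j hj
      simp only [lastCols, Finset.mem_filter, Finset.mem_univ, true_and] at hk hj
      exact hL (show k < j by rw [Fin.lt_def]; omega)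

/-- If `L A = M P` with `L` lower triangular and invertible, the upper flag minors of `A` are those
of `M` on the reversed column sets, up to nonzero factors depending only on the size of the
minor. -/
lemma flagU_scale {n : ℕ} {M A L : Matrix (Fin n) (Fin n) ℝ} (h : L * A = M * Pmat n)
    (hL : Lᵀ.BlockTriangular id) (hd : ∀ i, L i i ≠ 0) :
    ∃ s : ℕ → ℝ, (∀ k, s k ≠ 0) ∧ ∀ J, flagU M (barSet J) = s J.card * flagU A J := by
  have h' : Aᵀ * Lᵀ = Pmat n * Mᵀ := by
    rw [← transpose_mul, h, transpose_mul, Pmat_transpose]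
  refine ⟨fun k => (Equiv.Perm.sign (Fin.revPerm : Equiv.Perm (Fin k)) : ℤ) *
    gminor Lᵀ (firstRows n k) (firstRows n k), fun k => ?_, fun J => ?_⟩
  · refine mul_ne_zero (by exact_mod_cast Units.ne_zero _) ?_
    rw [gminor_diag hL]
    exact Finset.prod_ne_zero_iff.2 fun i _ => hd i
  · have hc : J.card = (firstRows n J.card).card :=
      (card_firstRows (by simpa using Finset.card_le_univ J)).symm
    have h1 := gminor_rev Mᵀ hc
    rw [← Pmat_mul, ← h', gminor_mul_right _ _ hc, gminor_transpose A hc,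
      gminor_transpose M (by rw [card_bar, ← hc])] at h1
    · rw [flagU, flagU, card_bar]
      have hs : (((Equiv.Perm.sign (Fin.revPerm : Equiv.Perm (Fin J.card)) : ℤ) : ℝ)) *
          ((Equiv.Perm.sign (Fin.revPerm : Equiv.Perm (Fin J.card)) : ℤ) : ℝ) = 1 := by
        exact_mod_cast Int.units_coe_mul_self _
      linear_combination (-gminor M (firstRows n J.card) (barSet J)) * hs -
        ((Equiv.Perm.sign (Fin.revPerm : Equiv.Perm (Fin J.card)) : ℤ) : ℝ) * h1
    · intro k hk j hj
      simp only [firstRows, Finset.mem_filter, Finset.mem_univ, true_and] at hk hj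
      exact hL (show j < k by rw [Fin.lt_def]; omega)

lemma det_unipotent {n : ℕ} {M : Matrix (Fin n) (Fin n) ℝ} (hM : M ∈ Nset n) : M.det = 1 := by
  rw [det_of_isUpperTriangular hM.1]
  simp [hM.2]

/-- The diagonal factor of the decomposition is invertible. -/
lemma diag_ne_zero {n : ℕ} {M M₁ M₂ D : Matrix (Fin n) (Fin n) ℝ} (hM : M ∈ Nset n)
    (hD : D.IsDiag) (h : Pmat n * M * Pmat n = M₁ * Pmat n * D * M₂) (i : Fin n) :
    D i i ≠ 0 := by
  intro h0
  have hP : (Pmat n).det * (Pmat n).det = 1 := by rw [← det_mul, Pmat_sq, det_one]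
  have hdet := congrArg det h
  have hD0 : D.det = 0 := by
    rw [← hD.diagonal_diag, det_diagonal]
    exact Finset.prod_eq_zero (Finset.mem_univ i) h0
  simp only [det_mul, hD0, det_unipotent hM, mul_one, mul_zero, zero_mul, hP] at hdet
  exact one_ne_zero hdet

lemma isDiag_mul_apply {n : ℕ} {D : Matrix (Fin n) (Fin n) ℝ} (hD : D.IsDiag)
    (A : Matrix (Fin n) (Fin n) ℝ) (i j : Fin n) : (D * A) i j = D i i * A i j := by
  rw [← hD.diagonal_diag, diagonal_mul]
  simp

lemma mul_isDiag_apply {n : ℕ} {D : Matrix (Fin n) (Fin n) ℝ} (hD : D.IsDiag)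
    (A : Matrix (Fin n) (Fin n) ℝ) (i j : Fin n) : (A * D) i j = A i j * D j j := by
  rw [← hD.diagonal_diag, mul_diagonal]
  simp

/-- The cross-ratio in `Ytr` and `(Ytu)⁻¹` is unchanged, up to reversing the index sets, when the
minors are rescaled by factors depending only on their size: both its numerator and its denominator
have one minor of size `a + c - b` and one of size `a + c - b - 1`. -/
lemma ratio_rev {n a b c : ℕ} {F G : Finset (Fin n) → ℝ} {s : ℕ → ℝ} (hs : ∀ k, s k ≠ 0)
    (hI : ∀ I, F (barSet I) = s I.card * G I)
    (ha : 1 ≤ a) (hab : a < b) (hbc : b < c) (hcn : c ≤ n) :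
    G (iv n 1 a ∪ iv n (b + 1) (c - 1)) * G (iv n 1 (a - 1) ∪ iv n b c) /
        (G (iv n 1 a ∪ iv n b (c - 1)) * G (iv n 1 (a - 1) ∪ iv n (b + 1) c)) =
      F (iv n (n + 1 - c) (n + 1 - b) ∪ iv n (n + 1 - a + 1) n) *
          F (iv n (n + 1 - c + 1) (n + 1 - b - 1) ∪ iv n (n + 1 - a) n) /
        (F (iv n (n + 1 - c) (n + 1 - b - 1) ∪ iv n (n + 1 - a + 1) n) *
          F (iv n (n + 1 - c + 1) (n + 1 - b) ∪ iv n (n + 1 - a) n)) := by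
  have e1 := hI (iv n 1 a ∪ iv n (b + 1) (c - 1))
  have e2 := hI (iv n 1 (a - 1) ∪ iv n b c)
  have e3 := hI (iv n 1 a ∪ iv n b (c - 1))
  have e4 := hI (iv n 1 (a - 1) ∪ iv n (b + 1) c)
  rw [card_iv_union (by omega) (by omega) (by omega) (by omega),
    bar_union_iv (p' := n + 1 - a) (q' := n) (r' := n + 1 - c + 1) (s' := n + 1 - b - 1)
      (by omega) (by omega) (by omega) (by omega),
    show a + 1 - 1 + (c - 1 + 1 - (b + 1)) = a + c - b - 1 by omega] at e1
  rw [card_iv_union (by omega) (by omega) (by omega) (by omega),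
    bar_union_iv (p' := n + 1 - a + 1) (q' := n) (r' := n + 1 - c) (s' := n + 1 - b)
      (by omega) (by omega) (by omega) (by omega),
    show a - 1 + 1 - 1 + (c + 1 - b) = a + c - b by omega] at e2
  rw [card_iv_union (by omega) (by omega) (by omega) (by omega),
    bar_union_iv (p' := n + 1 - a) (q' := n) (r' := n + 1 - c + 1) (s' := n + 1 - b)
      (by omega) (by omega) (by omega) (by omega),
    show a + 1 - 1 + (c - 1 + 1 - b) = a + c - b by omega] at e3
  rw [card_iv_union (by omega) (by omega) (by omega) (by omega),
    bar_union_iv (p' := n + 1 - a + 1) (q' := n) (r' := n + 1 - c) (s' := n + 1 - b - 1)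
      (by omega) (by omega) (by omega) (by omega),
    show a - 1 + 1 - 1 + (c + 1 - (b + 1)) = a + c - b - 1 by omega] at e4
  rw [e1, e2, e3, e4, ← mul_div_mul_left _ _ (mul_ne_zero (hs (a + c - b)) (hs (a + c - b - 1)))]
  congr 1 <;> ring

/-- Lemma 7 (`YYlem`): relations (3.15) and (3.16) among the Y-variables. -/
theorem stmt_13 (n : ℕ) (hn : 2 ≤ n) (M M₁ M₂ D : Matrix (Fin n) (Fin n) ℝ)
    (hM : Npos n M) (hdec : Decomp n M M₁ M₂ D)
    (a b c : ℕ) (ha : 1 ≤ a) (hab : a < b) (hbc : b < c) (hcn : c ≤ n) :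
    (Yr n M a b c = Ytu n M a (a + c - b) c ∧
      Yr n M a b c =
        gminor M (iv n a (b - 1)) (iv n (a + c - b + 1) c) *
            gminor M (iv n (a + 1) b) (iv n (a + c - b) (c - 1)) /
          (gminor M (iv n a b) (iv n (a + c - b) c) *
            gminor M (iv n (a + 1) (b - 1)) (iv n (a + c - b + 1) (c - 1)))) ∧
    Ytr n M₁ a b c = 1 / Yr n M (n + 1 - c) (n + 1 - b) (n + 1 - a) ∧
    Ytu n M₂ a b c = 1 / Yu n M (n + 1 - c) (n + 1 - b) (n + 1 - a) := by
  obtain ⟨hM₁, hM₂, hD, h⟩ := hdec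
  have hd := diag_ne_zero hM.1 hD h
  have hP := Pmat_sq n
  refine ⟨?_, ?_, ?_⟩
  · have hY : Yr n M a b c =
        gminor M (iv n a (b - 1)) (iv n (a + c - b + 1) c) *
            gminor M (iv n (a + 1) b) (iv n (a + c - b) (c - 1)) /
          (gminor M (iv n a b) (iv n (a + c - b) c) *
            gminor M (iv n (a + 1) (b - 1)) (iv n (a + c - b + 1) (c - 1))) := by
      rw [Yr, flagR_eq hM.1 (u := a + c - b + 1), flagR_eq hM.1 (u := a + c - b),
        flagR_eq hM.1 (u := a + c - b), flagR_eq hM.1 (u := a + c - b + 1)]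
      · simp only [Nat.add_sub_cancel]
      all_goals omega
    refine ⟨?_, hY⟩
    rw [hY, Ytu, flagU_eq hM.1 (v := b), flagU_eq hM.1 (v := b - 1),
      flagU_eq hM.1 (v := b - 1), flagU_eq hM.1 (v := b)]
    · rw [Nat.sub_add_cancel ha]
      ring
    all_goals omega
  · have hL : M₁ * (Pmat n * (D * M₂) * Pmat n) = Pmat n * M := by
      calc M₁ * (Pmat n * (D * M₂) * Pmat n) = (M₁ * Pmat n * D * M₂) * Pmat n := by
            simp only [Matrix.mul_assoc]
        _ = Pmat n * M := by rw [← h, Matrix.mul_assoc, hP, Matrix.mul_one]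
    obtain ⟨s, hs, hI⟩ := flagR_scale hL
      (by
        intro i j hij
        simp only [Pmat_mul, mul_Pmat, submatrix_apply, transpose_apply, id, isDiag_mul_apply hD]
        have h0 : M₂ j.rev i.rev = 0 :=
          hM₂.1.1 (show Fin.rev i < Fin.rev j from Fin.rev_lt_rev.2 hij)
        rw [h0, mul_zero])
      (by
        intro i
        simp only [Pmat_mul, mul_Pmat, submatrix_apply, id, isDiag_mul_apply hD, hM₂.1.2, mul_one]
        exact hd _)
    rw [Ytr, Yr, one_div_div]
    exact ratio_rev hs hI ha hab hbc hcn
  · have hL : (Pmat n * M₁ * Pmat n * D) * M₂ = M * Pmat n := by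
      calc (Pmat n * M₁ * Pmat n * D) * M₂ = Pmat n * (M₁ * Pmat n * D * M₂) := by
            simp only [Matrix.mul_assoc]
        _ = M * Pmat n := by
            rw [← h, ← Matrix.mul_assoc, ← Matrix.mul_assoc, hP, Matrix.one_mul]
    obtain ⟨s, hs, hI⟩ := flagU_scale hL
      (by
        intro i j hij
        simp only [Pmat_mul, mul_Pmat, submatrix_apply, transpose_apply, id, mul_isDiag_apply hD]
        have h0 : M₁ j.rev i.rev = 0 :=
          hM₁.1.1 (show Fin.rev i < Fin.rev j from Fin.rev_lt_rev.2 hij)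
        rw [h0, zero_mul])
      (by
        intro i
        simp only [Pmat_mul, mul_Pmat, submatrix_apply, id, mul_isDiag_apply hD, hM₁.1.2, one_mul]
        exact hd _)
    rw [Ytu, Yu, one_div, ← inv_div, ratio_rev hs hI ha hab hbc hcn]

end
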